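/- arXiv:0806.1188 — 2 statements merged into one kernel-verified Lean document; each statement's English description precedes it below -/
import Mathlib

section
/- Let k > r ≥ 1 be integers. Let Δ be a k-free group, and suppose that Δ has a normal subgroup N whose local rank is exactly r. Then Δ has local rank at most r. -/
/-- The rank of a subgroup: the minimal cardinality of a finite generating set,
or `⊤` if the subgroup is not finitely generated. -/
noncomputable def Subgroup.rk {Γ : Type*} [Group Γ] (H : Subgroup Γ) : ℕ∞ :=
  sInf {n : ℕ∞ | ∃ S : Finset Γ, (S.card : ℕ∞) = n ∧ Subgroup.closure (S : Set Γ) = H}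

/-- A group is `k`-free if every finitely generated subgroup of rank at most `k` is free. -/
def IsKFree (k : ℕ) (Γ : Type*) [Group Γ] : Prop :=
  ∀ H : Subgroup Γ, H.rk ≤ (k : ℕ∞) → IsFreeGroup H

/-- A group has local rank at most `r` if every finitely generated subgroup is contained in a
subgroup of rank at most `r`. -/
def LocalRankLe (G : Type*) [Group G] (r : ℕ) : Prop :=
  ∀ H : Subgroup G, H.FG → ∃ K : Subgroup G, H ≤ K ∧ K.rk ≤ (r : ℕ∞)

/-!
Let `K` have rank `n` and contain some `e ≠ 1` together with `x * e * x⁻¹`, and suppose that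
`K ⊔ ⟨x⟩` is free. If it had rank `n + 1`, then `x` and `n` generators of `K` would form a basis of
it, since finitely generated free groups are Hopfian; but in a free group with basis `x, s₁, …, sₙ`
no nontrivial element of `⟨s₁, …, sₙ⟩` is conjugated into `⟨s₁, …, sₙ⟩` by `x`. Hence
`K ⊔ ⟨x⟩` has rank at most `n`. Given finitely many elements `x` of `Δ`, start from a subgroup of
rank at most `r` containing for each of them such a pair `e`, `x * e * x⁻¹` in `N`, and adjoin them
one at a time: the rank never exceeds `r`, and `k`-freeness applies at each stage because `r < k`.
-/

open Function
open scoped Pointwise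

section ResiduallyFinite

theorem exists_perm_eqOn_of_finite {X : Type*} (e : Equiv.Perm X) (A : Set X) [Finite A] :
    ∃ σ : Equiv.Perm A, ∀ a : A, e a ∈ A → (σ a : X) = e a := by
  classical
  have := Fintype.ofFinite A
  let τ : {a : A // e a ∈ A} ≃ {a : A // e.symm a ∈ A} :=
    { toFun := fun a ↦ ⟨⟨e a, a.2⟩, by simp⟩
      invFun := fun a ↦ ⟨⟨e.symm a, a.2⟩, by simp⟩
      left_inv := fun a ↦ by simp
      right_inv := fun a ↦ by simp }
  exact ⟨τ.extendSubtype, fun a ha ↦ by rw [τ.extendSubtype_apply_of_mem a ha]; rfl⟩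

variable {α X : Type*} [MulAction (FreeGroup α) X]

theorem exists_monoidHom_perm_letter_eq_smul (A : Set X) [Finite A] :
    ∃ φ : FreeGroup α →* Equiv.Perm A, ∀ (p : α × Bool) (a : A),
      FreeGroup.mk [p] • (a : X) ∈ A →
        (φ (FreeGroup.mk [p]) a : X) = FreeGroup.mk [p] • (a : X) := by
  choose σ hσ using fun i : α ↦
    exists_perm_eqOn_of_finite (MulAction.toPerm (FreeGroup.of i) : Equiv.Perm X) A
  refine ⟨FreeGroup.lift σ, ?_⟩
  rintro ⟨i, _ | _⟩ a ha
  · have h_mk : (FreeGroup.mk [(i, false)] : FreeGroup α) = (FreeGroup.of i)⁻¹ := rfl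
    rw [h_mk] at ha ⊢
    have h_inv : (σ i)⁻¹ a = ⟨(FreeGroup.of i)⁻¹ • (a : X), ha⟩ := by
      rw [Equiv.Perm.inv_eq_iff_eq]
      ext
      rw [hσ] <;> simp
    simp [h_inv]
  · have h_mk : (FreeGroup.mk [(i, true)] : FreeGroup α) = FreeGroup.of i := rfl
    rw [h_mk] at ha ⊢
    simpa using hσ i a ha

theorem exists_monoidHom_perm_word_eq_smul (A : Set X) [Finite A] :
    ∃ φ : FreeGroup α →* Equiv.Perm A, ∀ (L : List (α × Bool)) (a : A),
      (∀ t, t <:+ L → FreeGroup.mk t • (a : X) ∈ A) →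
        (φ (FreeGroup.mk L) a : X) = FreeGroup.mk L • (a : X) := by
  obtain ⟨φ, hφ⟩ := exists_monoidHom_perm_letter_eq_smul (α := α) A
  refine ⟨φ, fun L a ↦ ?_⟩
  induction L with
  | nil => simp [← FreeGroup.one_eq_mk]
  | cons p L ih =>
    intro hL
    have h_mk : (FreeGroup.mk (p :: L) : FreeGroup α) = FreeGroup.mk [p] * FreeGroup.mk L := by
      rw [FreeGroup.mul_mk, List.singleton_append]
    have h_tail := ih fun t ht ↦ hL t (ht.trans (List.suffix_cons p L))
    have h_mem := hL _ List.suffix_rfl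
    rw [h_mk, mul_smul, ← h_tail] at h_mem
    rw [h_mk, map_mul, Equiv.Perm.mul_apply, hφ p _ h_mem, h_tail, mul_smul]

/- A word `w` acts nontrivially on the finite set of its suffixes: it sends the empty word to
`w`. -/
instance freeGroup_residuallyFinite : Group.ResiduallyFinite (FreeGroup α) := by
  classical
  refine Group.residuallyFinite_of_forall_exists_finite_monoidHom fun w hw ↦ ?_
  let A : Set (FreeGroup α) := FreeGroup.mk '' {t | t ∈ w.toWord.tails}
  have hA (t : List (α × Bool)) (ht : t <:+ w.toWord) : FreeGroup.mk t ∈ A :=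
    ⟨t, (List.mem_tails _ _).2 ht, rfl⟩
  have : Finite A := ((List.finite_toSet _).image _).to_subtype
  obtain ⟨φ, hφ⟩ := exists_monoidHom_perm_word_eq_smul (α := α) A
  refine ⟨Equiv.Perm A, inferInstance, inferInstance, φ, fun h_one ↦ hw ?_⟩
  have h_apply := hφ w.toWord ⟨1, hA [] List.nil_suffix⟩ (by simpa using hA)
  simpa [FreeGroup.mk_toWord, h_one] using h_apply.symm

end ResiduallyFinite

section Hopfian

variable {G : Type*} [Group G] [Group.FG G]

instance finite_monoidHom_of_fg {Q : Type*} [Group Q] [Finite Q] : Finite (G →* Q) := by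
  obtain ⟨α, _, φ, hφ⟩ := Group.fg_iff_exists_freeGroup_hom_surjective_finite.1 ‹Group.FG G›
  have : Finite (FreeGroup α →* Q) := Finite.of_equiv _ FreeGroup.lift
  exact Finite.of_injective (fun ψ : G →* Q ↦ ψ.comp φ) fun _ _ ↦ (MonoidHom.cancel_right hφ).1

/- Precomposition with `f` is injective, hence surjective, on the finite set of homomorphisms to a
finite group, so every such homomorphism kills the kernel of `f`. -/
theorem injective_of_surjective_of_residuallyFinite [Group.ResiduallyFinite G] (f : G →* G)
    (hf : Surjective f) : Injective f := by
  refine (injective_iff_map_eq_one f).2 fun g hg ↦ ?_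
  refine Group.eq_one_iff_forall_finiteIndexNormalSubroup g fun H ↦ ?_
  obtain ⟨ψ, hψ⟩ := Finite.surjective_of_injective
    (f := fun ψ : G →* G ⧸ H.toSubgroup ↦ ψ.comp f) (fun _ _ ↦ (MonoidHom.cancel_right hf).1)
    (QuotientGroup.mk' H.toSubgroup)
  have h_mk : (QuotientGroup.mk' H.toSubgroup) g = 1 := by
    rw [← hψ, MonoidHom.comp_apply, hg, map_one]
  exact (QuotientGroup.eq_one_iff g).1 h_mk

end Hopfian

section FreeFamily

/- Let `FreeGroup α` act on `Option (FreeGroup α)` fixing `none` and by translation elsewhere, and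
let the extra generator act by swapping `none` and `some 1`. Then `w` fixes `none`, so the conjugate
of `w` fixes `some 1`, whereas `w'` sends it to `some w'`. -/
theorem freeGroup_eq_one_of_conj_none_eq {α : Type*} {w w' : FreeGroup α}
    (h : FreeGroup.of none * FreeGroup.map some w * (FreeGroup.of none)⁻¹ =
      FreeGroup.map some w') : w = 1 := by
  classical
  let P : FreeGroup α →* Equiv.Perm (Option (FreeGroup α)) := MulAction.toPermHom _ _
  let Q : FreeGroup (Option α) →* Equiv.Perm (Option (FreeGroup α)) :=
    FreeGroup.lift fun o ↦ o.elim (Equiv.swap none (some 1)) (P ∘ FreeGroup.of)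
  have hQ_map (u : FreeGroup α) : Q (FreeGroup.map some u) = P u := by
    have : Q.comp (FreeGroup.map some) = P := by ext i : 1; simp [Q]
    exact DFunLike.congr_fun this u
  have hQ := congrArg (fun u ↦ Q u (some 1)) h
  have hw' : w' = 1 := by simpa [hQ_map, Q, P] using hQ.symm
  have hw : FreeGroup.map some w = FreeGroup.map (some : α → Option α) 1 := by
    simpa [hw', conj_eq_one_iff] using h
  exact FreeGroup.map_injective (Option.some_injective α) hw

theorem inf_conj_smul_eq_bot_of_lift_injective {Γ α : Type*} [Group Γ] {x : Γ} {s : α → Γ}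
    (h : Injective (FreeGroup.lift fun o : Option α ↦ o.elim x s)) :
    Subgroup.closure (Set.range s) ⊓ MulAut.conj x • Subgroup.closure (Set.range s) = ⊥ := by
  have h_comp : (FreeGroup.lift fun o : Option α ↦ o.elim x s).comp (FreeGroup.map some) =
      FreeGroup.lift s := by ext; simp
  have h_map (u : FreeGroup α) : FreeGroup.lift (fun o : Option α ↦ o.elim x s)
      (FreeGroup.map some u) = FreeGroup.lift s u := DFunLike.congr_fun h_comp u
  rw [eq_bot_iff, ← FreeGroup.range_lift_eq_closure]
  rintro _ ⟨⟨w', rfl⟩, ⟨_, ⟨w, rfl⟩, h_conj⟩⟩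
  have hw : w = 1 := by
    refine freeGroup_eq_one_of_conj_none_eq (w' := w') (h ?_)
    simpa [h_map] using h_conj
  simpa [hw] using h_conj.symm

end FreeFamily

section Rank

variable {Γ : Type*} [Group Γ]

theorem rk_closure_le_encard (s : Set Γ) : (Subgroup.closure s).rk ≤ s.encard := by
  obtain hs | hs := s.finite_or_infinite
  · exact sInf_le ⟨hs.toFinset, by rw [hs.encard_eq_coe_toFinset_card], by simp⟩
  · simp [hs.encard_eq]

theorem exists_closure_eq_encard_eq_rk (H : Subgroup Γ) :
    ∃ s : Set Γ, Subgroup.closure s = H ∧ s.encard = H.rk := by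
  obtain h_top | h_lt := eq_top_or_lt_top H.rk
  · refine ⟨H, H.closure_eq, h_top ▸ top_le_iff.1 ?_⟩
    simpa [h_top] using rk_closure_le_encard (H : Set Γ)
  · have h_ne : {n : ℕ∞ | ∃ S : Finset Γ, (S.card : ℕ∞) = n ∧
        Subgroup.closure (S : Set Γ) = H}.Nonempty := by
      by_contra! h_empty
      simp [Subgroup.rk, h_empty] at h_lt
    obtain ⟨S, hS, hSH⟩ := csInf_mem h_ne
    exact ⟨S, hSH, by rw [Set.encard_coe_eq_coe_finsetCard, hS, Subgroup.rk]⟩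

theorem rk_bot : (⊥ : Subgroup Γ).rk = 0 := by
  simpa using rk_closure_le_encard (∅ : Set Γ)

theorem rk_map_le {Γ' : Type*} [Group Γ'] (f : Γ →* Γ') (H : Subgroup Γ) :
    (H.map f).rk ≤ H.rk := by
  obtain ⟨s, rfl, hs⟩ := exists_closure_eq_encard_eq_rk H
  rw [MonoidHom.map_closure, ← hs]
  exact (rk_closure_le_encard _).trans (Set.encard_image_le _ _)

theorem rk_sup_zpowers_le (K : Subgroup Γ) (x : Γ) : (K ⊔ Subgroup.zpowers x).rk ≤ K.rk + 1 := by
  obtain ⟨s, rfl, hs⟩ := exists_closure_eq_encard_eq_rk K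
  rw [Subgroup.zpowers_eq_closure, ← Subgroup.closure_union, ← hs, ← Set.encard_singleton x]
  exact (rk_closure_le_encard _).trans (Set.encard_union_le s {x})

theorem rk_range_le_card {ι : Type*} (f : FreeGroup ι →* Γ) : f.range.rk ≤ ENat.card ι := by
  rw [← FreeGroup.lift.apply_symm_apply f, FreeGroup.range_lift_eq_closure, ← Set.image_univ,
    ← Set.encard_univ]
  exact (rk_closure_le_encard _).trans (Set.encard_image_le _ _)

theorem rk_le_card_of_basis {H : Subgroup Γ} {ι : Type*} (b : FreeGroupBasis ι H) :
    H.rk ≤ ENat.card ι := by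
  have h_range : (H.subtype.comp b.repr.symm.toMonoidHom).range = H := by
    rw [MonoidHom.range_comp, MonoidHom.range_eq_top.2 b.repr.symm.surjective,
      ← MonoidHom.range_eq_map, Subgroup.range_subtype]
  simpa only [h_range] using rk_range_le_card (H.subtype.comp b.repr.symm.toMonoidHom)

theorem exists_surjective_of_card_le {ι κ : Type*} [Finite ι] [Nonempty ι]
    (h : ENat.card ι ≤ ENat.card κ) : ∃ p : κ → ι, Surjective p := by
  refine exists_surjective_iff.2 ⟨inferInstance, Cardinal.lift_mk_le'.1 ?_⟩
  refine (Cardinal.toENat_le_iff_of_le_aleph0 ?_).1 ?_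
  · simp
  · simpa [ENat.card] using h

theorem injective_of_card_le_rk_range {ι : Type*} [Finite ι] (f : FreeGroup ι →* Γ)
    [IsFreeGroup f.range] (h : ENat.card ι ≤ f.range.rk) : Injective f := by
  cases isEmpty_or_nonempty ι
  · exact injective_of_subsingleton f
  let b := IsFreeGroup.basis f.range
  obtain ⟨p, hp⟩ := exists_surjective_of_card_le (h.trans (rk_le_card_of_basis b))
  let g : f.range →* FreeGroup ι := (FreeGroup.map p).comp b.repr.toMonoidHom
  have hg : Surjective g := (FreeGroup.map_surjective hp).comp b.repr.surjective
  have h_inj : Injective (g.comp f.rangeRestrict) :=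
    injective_of_surjective_of_residuallyFinite _ (hg.comp f.rangeRestrict_surjective)
  exact f.rangeRestrict_injective_iff.1 (Injective.of_comp (f := g) h_inj)

theorem rk_sup_zpowers_le_of_inf_conj_smul_ne_bot {K : Subgroup Γ} {x : Γ}
    (hfree : IsFreeGroup ↥(K ⊔ Subgroup.zpowers x)) (h : K ⊓ MulAut.conj x • K ≠ ⊥) :
    (K ⊔ Subgroup.zpowers x).rk ≤ K.rk := by
  obtain ⟨s, rfl, hs⟩ := exists_closure_eq_encard_eq_rk K
  rw [← hs]
  contrapose! h
  have : Finite s := Set.encard_lt_top_iff.1 (h.trans_le le_top)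
  let f : FreeGroup (Option s) →* Γ := FreeGroup.lift fun o ↦ o.elim x (↑)
  have hf : f.range = Subgroup.closure s ⊔ Subgroup.zpowers x := by
    rw [FreeGroup.range_lift_eq_closure, Option.range_elim, Subtype.range_coe, Set.insert_eq,
      Subgroup.closure_union, Subgroup.zpowers_eq_closure, sup_comm]
  rw [← hf] at h hfree
  have h_card : ENat.card (Option s) ≤ f.range.rk := by
    have : ENat.card (Option s) = s.encard + 1 := by
      rw [← ENat.card_coe_set_eq]
      simp [ENat.card]
    exact this ▸ Order.add_one_le_of_lt h
  simpa using inf_conj_smul_eq_bot_of_lift_injective (injective_of_card_le_rk_range f h_card)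

end Rank

theorem localRankLe_of_subsingleton {G : Type*} [Group G] [Subsingleton G] (r : ℕ) :
    LocalRankLe G r :=
  fun H _ ↦ ⟨H, le_rfl, by simp [Subsingleton.elim H ⊥, rk_bot]⟩

theorem LocalRankLe.exists_le_rk_le {Δ : Type*} [Group Δ] {N : Subgroup Δ} {r : ℕ}
    (hN : LocalRankLe N r) {F : Subgroup Δ} (hFN : F ≤ N) (hF : F.FG) :
    ∃ K : Subgroup Δ, F ≤ K ∧ K.rk ≤ r := by
  have hF' : (F.subgroupOf N).FG := by
    rw [← Group.fg_iff_subgroup_fg] at hF ⊢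
    exact Group.fg_of_surjective (f := (Subgroup.subgroupOfEquivOfLe hFN).symm.toMonoidHom)
      (MulEquiv.surjective _)
  obtain ⟨K, hFK, hK⟩ := hN (F.subgroupOf N) hF'
  refine ⟨K.map N.subtype, ?_, (rk_map_le _ K).trans hK⟩
  rw [← Subgroup.map_subgroupOf_eq_of_le hFN]
  exact Subgroup.map_mono hFK

theorem exists_fg_le_forall_inf_conj_smul_ne_bot {Δ : Type*} [Group Δ] {N : Subgroup Δ} {x : Δ}
    (h : N ⊓ MulAut.conj x • N ≠ ⊥) :
    ∃ E ≤ N, E.FG ∧ ∀ K, E ≤ K → K ⊓ MulAut.conj x • K ≠ ⊥ := by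
  obtain ⟨g, ⟨hg, e, he, h_conj⟩, hg_one⟩ := (Subgroup.bot_or_exists_ne_one _).resolve_left h
  refine ⟨Subgroup.closure {g, e}, ?_, (Group.fg_iff_subgroup_fg _).1 inferInstance,
    fun K hK h_bot ↦ hg_one ?_⟩
  · simpa [Set.pair_subset_iff] using ⟨hg, he⟩
  · have hgK : g ∈ K := hK (Subgroup.subset_closure (by simp))
    have heK : e ∈ K := hK (Subgroup.subset_closure (by simp))
    exact (Subgroup.eq_bot_iff_forall _).1 h_bot g ⟨hgK, e, heK, h_conj⟩

theorem stmt3_general {Δ : Type*} [Group Δ] {k r : ℕ} (hrk : r < k) (hfree : IsKFree k Δ)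
    (N : Subgroup Δ) (hN : ∀ x : Δ, N ⊓ MulAut.conj x • N ≠ ⊥) (hNle : LocalRankLe N r) :
    LocalRankLe Δ r := by
  classical
  rintro _ ⟨T, rfl⟩
  suffices h : ∀ F ≤ N, F.FG →
      ∃ K : Subgroup Δ, Subgroup.closure (T : Set Δ) ⊔ F ≤ K ∧ K.rk ≤ r by
    simpa using h ⊥ bot_le Subgroup.FG.bot
  induction T using Finset.induction_on with
  | empty => simpa using fun F hFN hF ↦ hNle.exists_le_rk_le (F := F) hFN hF
  | insert x T _ ih =>
    intro F hFN hF
    obtain ⟨E, hEN, hE, h_ne_bot⟩ := exists_fg_le_forall_inf_conj_smul_ne_bot (hN x)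
    obtain ⟨K, hK, hKr⟩ := ih (F ⊔ E) (sup_le hFN hEN) (hF.sup hE)
    obtain ⟨hTK, hFK, hEK⟩ : Subgroup.closure T ≤ K ∧ F ≤ K ∧ E ≤ K := by simpa using hK
    have h_free : IsFreeGroup ↥(K ⊔ Subgroup.zpowers x) := hfree _ <|
      calc (K ⊔ Subgroup.zpowers x).rk ≤ K.rk + 1 := rk_sup_zpowers_le K x
        _ ≤ r + 1 := by gcongr
        _ ≤ k := mod_cast hrk
    refine ⟨K ⊔ Subgroup.zpowers x, sup_le ?_ (le_sup_of_le_left hFK),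
      (rk_sup_zpowers_le_of_inf_conj_smul_ne_bot h_free (h_ne_bot K hEK)).trans hKr⟩
    rw [Finset.coe_insert, Set.insert_eq, Subgroup.closure_union, ← Subgroup.zpowers_eq_closure]
    exact sup_le le_sup_right (le_sup_of_le_left hTK)

/-- If `k > r ≥ 1`, `Δ` is `k`-free, and `Δ` has a normal subgroup `N` whose local rank is
exactly `r`, then `Δ` has local rank at most `r`. -/
theorem stmt3 {Δ : Type*} [Group Δ] (k r : ℕ) (hr : 1 ≤ r) (hrk : r < k)
    (hfree : IsKFree k Δ) (N : Subgroup Δ) (hN : N.Normal)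
    (hNle : LocalRankLe N r) (hNexact : ∀ s : ℕ, s < r → ¬ LocalRankLe N s) :
    LocalRankLe Δ r :=
  have hN_ne_bot : N ≠ ⊥ := by rintro rfl; exact hNexact 0 hr (localRankLe_of_subsingleton 0)
  stmt3_general hrk hfree N (fun x ↦ by rwa [Subgroup.Normal.conj_smul_eq_self, inf_idem]) hNle
end

section
/- Let m be a positive integer and let H be a finitely generated group which is m-free and has rank at least m. Let S be a finite generating set for H and let T₀ ⊆ S be an independent subset with |T₀| ≤ m. Then there exists an independent set T with T₀ ⊆ T ⊆ S and |T| = m. -/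
/-- A subset `S` of a group is independent if the subgroup it generates is free with basis
`S`, i.e. the canonical homomorphism from the free group on `S` is injective. -/
def IsIndependent {G : Type*} [Group G] (S : Set G) : Prop :=
  Function.Injective (FreeGroup.lift ((↑) : S → G))

/-!
Free groups are residually finite, so a free group of finite rank `k` is Hopfian, and a homomorphism
onto it from a group of rank at most `k` is injective. In particular a finite set `T` is independent
as soon as its closure is free of rank at least `|T|`.

Let `T ⊆ S` be independent with `|T| < m`, and add the elements of `S` to the subgroup generated by
`T` one at a time. Since the rank finally exceeds `|T|`, some `s` raises it from at most `|T|`, say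
for the subgroup `K` generated by a set `F` with at most `|T|` elements, to `|T| + 1`. By
`m`-freeness `F ∪ {s}` is a basis of `⟨K, s⟩`, so there is a retraction `⟨K, s⟩ → K` killing `s`. It
maps the free group `⟨T, s⟩` onto `⟨T⟩` and is not injective, so `⟨T, s⟩` has rank `|T| + 1` and
`T ∪ {s}` is independent.
-/

theorem exists_perm_coe_apply_eq_of_injective {α : Type*} {f : α → α}
    (hf : Function.Injective f) (A : Set α) [Finite A] :
    ∃ σ : Equiv.Perm A, ∀ x : A, f x ∈ A → (σ x : α) = f x := by
  classical
  have := Fintype.ofFinite A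
  let g : {x : A // f x ∈ A} → A := fun x ↦ ⟨f x, x.2⟩
  have hg : Function.Injective g := fun x y h ↦
    Subtype.ext (Subtype.ext (hf (congrArg Subtype.val h)))
  let e : {x : A // f x ∈ A} ≃ {y : A // y ∈ Set.range g} := Equiv.ofInjective g hg
  exact ⟨e.extendSubtype, fun x hx ↦ congrArg Subtype.val (e.extendSubtype_apply_of_mem x hx)⟩

theorem coe_lift_perm_mk_apply_one {α : Type*} {A : Set (FreeGroup α)} (σ : α → Equiv.Perm A)
    (hσ : ∀ a (x : A), FreeGroup.of a * x.1 ∈ A → (σ a x : FreeGroup α) = FreeGroup.of a * x)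
    (L : List (α × Bool)) (hL : ∀ L', L' <:+ L → FreeGroup.mk L' ∈ A) :
    (FreeGroup.lift σ (FreeGroup.mk L) ⟨1, hL [] L.nil_suffix⟩ : FreeGroup α) =
      FreeGroup.mk L := by
  induction L with
  | nil => rfl
  | cons c L ih =>
    have hmk : FreeGroup.mk (c :: L) = FreeGroup.mk [c] * FreeGroup.mk L := by
      rw [FreeGroup.mul_mk, List.singleton_append]
    have hL_mem : FreeGroup.mk L ∈ A := hL L (List.suffix_cons c L)
    have hcL_mem : FreeGroup.mk [c] * FreeGroup.mk L ∈ A := hmk ▸ hL _ List.suffix_rfl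
    have hstep : FreeGroup.lift σ (FreeGroup.mk L) ⟨1, hL [] (List.nil_suffix)⟩ =
        ⟨FreeGroup.mk L, hL_mem⟩ :=
      Subtype.ext (ih fun L' hL' ↦ hL L' (hL'.trans (List.suffix_cons c L)))
    rw [hmk, map_mul, Equiv.Perm.mul_apply, hstep]
    obtain ⟨a, _ | _⟩ := c
    · change (((FreeGroup.lift σ (FreeGroup.of a)⁻¹) _ : A) : FreeGroup α) =
        (FreeGroup.of a)⁻¹ * FreeGroup.mk L
      have hback : σ a ⟨(FreeGroup.of a)⁻¹ * FreeGroup.mk L, hcL_mem⟩ =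
          ⟨FreeGroup.mk L, hL_mem⟩ :=
        Subtype.ext <| (hσ a _ (by rwa [mul_inv_cancel_left])).trans (mul_inv_cancel_left _ _)
      rw [map_inv, FreeGroup.lift_apply_of, Equiv.Perm.inv_eq_iff_eq.2 hback.symm]
    · change ((FreeGroup.lift σ (FreeGroup.of a) _ : A) : FreeGroup α) =
        FreeGroup.of a * FreeGroup.mk L
      rw [FreeGroup.lift_apply_of]
      exact hσ a ⟨_, hL_mem⟩ hcL_mem

/-- A nontrivial word acts nontrivially on the finite set of its suffixes, once left multiplication
by each letter, which is only partially defined there, is extended to a permutation. -/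
instance residuallyFinite_freeGroup {α : Type*} : Group.ResiduallyFinite (FreeGroup α) := by
  refine Group.residuallyFinite_of_forall_exists_finite_monoidHom fun w hw ↦ ?_
  obtain ⟨L, rfl⟩ : ∃ L, FreeGroup.mk L = w := Quot.exists_rep w
  let A : Set (FreeGroup α) := FreeGroup.mk '' {L' | L' <:+ L}
  have hL : ∀ L', L' <:+ L → FreeGroup.mk L' ∈ A := fun L' hL' ↦ ⟨L', hL', rfl⟩
  have : Finite A := by
    have hfin : {L' | L' <:+ L}.Finite := by
      simpa only [List.mem_tails] using L.tails.finite_toSet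
    exact (hfin.image _).to_subtype
  choose σ hσ using fun a : α ↦
    exists_perm_coe_apply_eq_of_injective (mul_right_injective (FreeGroup.of a)) A
  refine ⟨Equiv.Perm A, inferInstance, inferInstance, FreeGroup.lift σ, fun h ↦ hw ?_⟩
  rw [← coe_lift_perm_mk_apply_one σ hσ L hL, h, Equiv.Perm.one_apply]

theorem finite_monoidHom_of_fg_s4 {G P : Type*} [Group G] [Group P] [Group.FG G] [Finite P] :
    Finite (G →* P) := by
  obtain ⟨S, hS⟩ := Group.FG.out (G := G)
  refine Finite.of_injective (fun (φ : G →* P) (x : S) ↦ φ x) fun φ ψ h ↦ ?_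
  exact MonoidHom.eq_of_eqOn_dense hS fun x hx ↦ congrFun h ⟨x, hx⟩

/-- Precomposition with `φ` permutes the finite set `G →* Q` for every finite quotient `Q` of `G`,
so each projection `G → Q` factors through `φ` and hence kills `φ.ker`. -/
theorem injective_of_surjective_of_residuallyFinite_s4 {G : Type*} [Group G] [Group.FG G]
    [Group.ResiduallyFinite G] {φ : G →* G} (hφ : Function.Surjective φ) :
    Function.Injective φ := by
  refine (injective_iff_map_eq_one φ).2 fun w hw ↦
    Group.eq_one_iff_forall_finiteIndexNormalSubroup w fun N ↦ ?_
  have : Finite (G →* G ⧸ N.toSubgroup) := finite_monoidHom_of_fg_s4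
  have hcomp : Function.Injective fun ψ : G →* G ⧸ N.toSubgroup ↦ ψ.comp φ :=
    fun _ _ ↦ (MonoidHom.cancel_right hφ).1
  obtain ⟨ψ, hψ⟩ := Finite.surjective_of_injective hcomp (QuotientGroup.mk' N.toSubgroup)
  have hw_mk : QuotientGroup.mk' N.toSubgroup w = 1 := by
    rw [← hψ, MonoidHom.comp_apply, hw, map_one]
  exact (QuotientGroup.eq_one_iff w).1 hw_mk

section Rank

variable {A B κ : Type*} [Group A] [Group B]

theorem rank_le_card_iff_exists_surjective [Group.FG A] [Finite κ] :
    Group.rank A ≤ Nat.card κ ↔ ∃ p : FreeGroup κ →* A, Function.Surjective p := by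
  classical
  constructor
  · intro h
    obtain ⟨S, hS_card, hS⟩ := Group.rank_spec A
    obtain ⟨e⟩ : Nonempty (S ↪ κ) := by
      have := Fintype.ofFinite κ
      refine Function.Embedding.nonempty_of_card_le ?_
      rwa [Fintype.card_coe, hS_card, ← Nat.card_eq_fintype_card]
    refine ⟨FreeGroup.lift (Function.extend e (↑) 1), ?_⟩
    rw [FreeGroup.lift_surjective_iff_closure_range_eq_top, eq_top_iff, ← hS]
    exact Subgroup.closure_mono fun x hx ↦ ⟨e ⟨x, hx⟩, e.injective.extend_apply _ _ _⟩
  · rintro ⟨p, hp⟩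
    have := Fintype.ofFinite κ
    have hgen : Subgroup.closure (Finset.univ.image (p ∘ FreeGroup.of) : Set A) = ⊤ := by
      rw [Finset.coe_image, Finset.coe_univ, Set.image_univ, Set.range_comp,
        ← MonoidHom.map_closure, FreeGroup.closure_range_of, Subgroup.map_top_of_surjective p hp]
    exact (Group.rank_le hgen).trans (Finset.card_image_le.trans_eq Nat.card_eq_fintype_card.symm)

theorem rank_le_card_of_freeGroupBasis (b : FreeGroupBasis κ B) [Finite κ] [Group.FG B] :
    Group.rank B ≤ Nat.card κ :=
  rank_le_card_iff_exists_surjective.2 ⟨b.repr.symm.toMonoidHom, b.repr.symm.surjective⟩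

theorem finite_of_freeGroupBasis (b : FreeGroupBasis κ B) [Group.FG B] : Finite κ := by
  by_contra hκ
  rw [not_finite_iff_infinite] at hκ
  have : Finite (B →* Multiplicative (ZMod 2)) := finite_monoidHom_of_fg_s4
  have : Finite (κ → Multiplicative (ZMod 2)) := Finite.of_equiv _ b.lift.symm
  exact not_finite (κ → Multiplicative (ZMod 2))

theorem injective_of_rank_le_card_of_freeGroupBasis_range {π : A →* B}
    (b : FreeGroupBasis κ π.range) [Finite κ] [Group.FG A] (hA : Group.rank A ≤ Nat.card κ) :
    Function.Injective π := by
  obtain ⟨p, hp⟩ := rank_le_card_iff_exists_surjective.1 hA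
  let φ : FreeGroup κ →* FreeGroup κ := b.repr.toMonoidHom.comp (π.rangeRestrict.comp p)
  have hφ : Function.Injective φ := injective_of_surjective_of_residuallyFinite_s4
    (b.repr.surjective.comp (π.rangeRestrict_surjective.comp hp))
  have hπp : Function.Injective (π.rangeRestrict ∘ p) := Function.Injective.of_comp hφ
  exact π.rangeRestrict_injective_iff.1 (hπp.of_comp_right hp)

end Rank

section Subgroup

variable {G : Type*} [Group G] {K : Subgroup G}

theorem rk_le_natCast_iff {n : ℕ} :
    K.rk ≤ n ↔ ∃ S : Finset G, S.card ≤ n ∧ Subgroup.closure (S : Set G) = K := by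
  constructor
  · intro h
    have hlt : K.rk < (n + 1 : ℕ) := h.trans_lt (by exact_mod_cast n.lt_succ_self)
    obtain ⟨_, ⟨S, rfl, hS⟩, hSn⟩ := sInf_lt_iff.1 hlt
    exact ⟨S, Nat.lt_succ_iff.1 (by exact_mod_cast hSn), hS⟩
  · rintro ⟨S, hS_card, hS⟩
    have hle : K.rk ≤ S.card := sInf_le ⟨S, rfl, hS⟩
    exact hle.trans (by exact_mod_cast hS_card)

theorem rk_eq_rank [Group.FG K] : K.rk = Group.rank K := by
  classical
  apply le_antisymm
  · obtain ⟨S, hS_card, hS⟩ := Group.rank_spec K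
    refine rk_le_natCast_iff.2 ⟨S.image K.subtype, Finset.card_image_le.trans_eq hS_card, ?_⟩
    rw [Finset.coe_image, ← MonoidHom.map_closure, hS, ← MonoidHom.range_eq_map, K.range_subtype]
  · refine le_sInf ?_
    rintro _ ⟨S, rfl, rfl⟩
    exact_mod_cast Subgroup.rank_closure_finset_le_card S

theorem closure_insert_closure (s : G) (X : Set G) :
    Subgroup.closure (insert s (Subgroup.closure X : Set G)) = Subgroup.closure (insert s X) := by
  rw [Set.insert_eq, Set.insert_eq, Subgroup.closure_union, Subgroup.closure_eq,
    Subgroup.closure_union]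

theorem isFreeGroup_of_le {L : Subgroup G} (hLK : L ≤ K) [IsFreeGroup K] : IsFreeGroup L :=
  IsFreeGroup.ofMulEquiv (Subgroup.subgroupOfEquivOfLe hLK)

end Subgroup

section Independent

variable {G : Type*} [Group G]

/-- The elements of an independent set, as a basis of the subgroup they generate. -/
noncomputable def IsIndependent.basis {S : Set G} (hS : IsIndependent S) :
    FreeGroupBasis S (Subgroup.closure S) :=
  .ofRepr <| (MulEquiv.subgroupCongr (FreeGroup.closure_eq_range S)).trans
    (MonoidHom.ofInjective hS).symm

theorem IsIndependent.basis_apply {S : Set G} (hS : IsIndependent S) (x : S) :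
    hS.basis x = ⟨x, Subgroup.subset_closure x.2⟩ := by
  change hS.basis.repr.symm (FreeGroup.of x) = _
  refine Subtype.ext ?_
  exact FreeGroup.lift_apply_of

theorem IsIndependent.ne_one {S : Set G} (hS : IsIndependent S) {x : G} (hx : x ∈ S) : x ≠ 1 := by
  intro h
  refine FreeGroup.of_ne_one (⟨x, hx⟩ : S) (hS ?_)
  exact FreeGroup.lift_apply_of.trans (h.trans (map_one _).symm)

theorem isIndependent_of_isFreeGroup_of_card_le_rk {T : Finset G}
    (hfree : IsFreeGroup (Subgroup.closure (T : Set G)))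
    (hT : (T.card : ℕ∞) ≤ (Subgroup.closure (T : Set G)).rk) : IsIndependent (T : Set G) := by
  rw [FreeGroup.closure_eq_range] at hfree hT
  let b := IsFreeGroup.basis (FreeGroup.lift ((↑) : ↥(T : Set G) → G)).range
  have := finite_of_freeGroupBasis b
  refine injective_of_rank_le_card_of_freeGroupBasis_range b ?_
  calc Group.rank (FreeGroup (T : Set G))
    _ ≤ Nat.card (T : Set G) := rank_le_card_of_freeGroupBasis (.ofFreeGroup _)
    _ = T.card := by rw [Nat.card_coe_set_eq, Set.ncard_coe_finset]
    _ ≤ Group.rank (FreeGroup.lift ((↑) : ↥(T : Set G) → G)).range := by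
      rw [rk_eq_rank] at hT
      exact_mod_cast hT
    _ ≤ Nat.card _ := rank_le_card_of_freeGroupBasis b

theorem IsIndependent.exists_retraction {s : G} {F : Set G} (hF : IsIndependent (insert s F))
    (hs : s ∉ F) :
    ∃ ρ : Subgroup.closure (insert s F) →* G,
      ρ ⟨s, Subgroup.subset_closure (Set.mem_insert s F)⟩ = 1 ∧
        ∀ y (hy : y ∈ Subgroup.closure F),
          ρ ⟨y, Subgroup.closure_mono (Set.subset_insert s F) hy⟩ = y := by
  classical
  let ρ : Subgroup.closure (insert s F) →* G :=
    hF.basis.lift fun x ↦ if (x : G) = s then 1 else x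
  have hρ : ∀ x (hx : x ∈ insert s F),
      ρ ⟨x, Subgroup.subset_closure hx⟩ = if x = s then 1 else x := by
    intro x hx
    rw [← hF.basis_apply ⟨x, hx⟩, FreeGroupBasis.lift_apply_apply, hF.basis.repr_apply_coe,
      FreeGroup.lift_apply_of]
  refine ⟨ρ, by rw [hρ s (Set.mem_insert s F), if_pos rfl], ?_⟩
  have hFs : Subgroup.closure F ≤ Subgroup.closure (insert s F) :=
    Subgroup.closure_mono (Set.subset_insert s F)
  suffices hid : ρ.comp (Subgroup.inclusion hFs) = (Subgroup.closure F).subtype from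
    fun y hy ↦ DFunLike.congr_fun hid ⟨y, hy⟩
  refine MonoidHom.eq_of_eqOn_dense Subgroup.closure_closure_coe_preimage fun x hx ↦ ?_
  have hxs : (x : G) ≠ s := fun h ↦ hs (h ▸ hx)
  exact (hρ x (Set.mem_insert_of_mem s hx)).trans (if_neg hxs)

theorem IsIndependent.card_lt_rk_closure_insert {s : G} {T : Finset G}
    (hT : IsIndependent (T : Set G)) {π : Subgroup.closure (insert s (T : Set G)) →* G}
    (hs : s ≠ 1) (hπs : π ⟨s, Subgroup.subset_closure (Set.mem_insert s _)⟩ = 1)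
    (hπT : ∀ t (ht : t ∈ T),
      π ⟨t, Subgroup.subset_closure (Set.mem_insert_of_mem s ht)⟩ = t) :
    (T.card : ℕ∞) < (Subgroup.closure (insert s (T : Set G))).rk := by
  have hrange : π.range = Subgroup.closure (T : Set G) := by
    apply le_antisymm
    · rw [MonoidHom.range_eq_map, ← Subgroup.closure_closure_coe_preimage,
        MonoidHom.map_closure, Subgroup.closure_le]
      rintro _ ⟨⟨x, hx⟩, hxs | hxT, rfl⟩
      · obtain rfl : x = s := hxs
        exact hπs ▸ one_mem _
      · exact (hπT x hxT).symm ▸ Subgroup.subset_closure hxT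
    · rw [Subgroup.closure_le]
      exact fun t ht ↦ ⟨_, hπT t ht⟩
  by_contra! hrk
  rw [rk_eq_rank] at hrk
  have hπ : Function.Injective π := by
    refine injective_of_rank_le_card_of_freeGroupBasis_range (hrange ▸ hT.basis) ?_
    rw [Nat.card_coe_set_eq, Set.ncard_coe_finset]
    exact_mod_cast hrk
  exact hs (congrArg Subtype.val (hπ (hπs.trans (map_one π).symm)))

theorem IsIndependent.insert_of_subset_closure {s : G} {F : Set G} {T : Finset G}
    (hF : IsIndependent (insert s F)) (hs : s ∉ F) (hT : IsIndependent (T : Set G))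
    (hTF : (T : Set G) ⊆ Subgroup.closure F) : IsIndependent (insert s (T : Set G)) := by
  classical
  obtain ⟨ρ, hρs, hρF⟩ := hF.exists_retraction hs
  have hle : Subgroup.closure (insert s (T : Set G)) ≤ Subgroup.closure (insert s F) := by
    rw [Subgroup.closure_le, Set.insert_subset_iff]
    exact ⟨Subgroup.subset_closure (Set.mem_insert s F),
      hTF.trans (Subgroup.closure_mono (Set.subset_insert s F))⟩
  have hrk : (T.card : ℕ∞) < (Subgroup.closure (insert s (T : Set G))).rk :=
    hT.card_lt_rk_closure_insert (π := ρ.comp (Subgroup.inclusion hle))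
      (hF.ne_one (Set.mem_insert s F)) hρs fun t ht ↦ hρF t (hTF ht)
  have : IsFreeGroup (Subgroup.closure (insert s F)) := hF.basis.isFreeGroup
  have hfree := isFreeGroup_of_le hle
  rw [← Finset.coe_insert] at hrk hfree ⊢
  refine isIndependent_of_isFreeGroup_of_card_le_rk hfree (le_trans ?_ (Order.add_one_le_of_lt hrk))
  exact_mod_cast Finset.card_insert_le s T

end Independent

section KFree

variable {G : Type*} [Group G] {m : ℕ} {T : Finset G}

theorem IsKFree.isIndependent_insert_of_card_lt_rk (hfree : IsKFree m G) (hTm : T.card < m)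
    (hT : IsIndependent (T : Set G)) {K : Subgroup G} (hTK : (T : Set G) ⊆ K)
    (hK : K.rk ≤ T.card) {s : G}
    (hs : (T.card : ℕ∞) < (Subgroup.closure (insert s (K : Set G))).rk) :
    s ∉ K ∧ IsIndependent (insert s (T : Set G)) := by
  classical
  have hsK : s ∉ K := by
    intro hsK
    rw [Set.insert_eq_of_mem hsK, Subgroup.closure_eq] at hs
    exact hs.not_ge hK
  refine ⟨hsK, ?_⟩
  obtain ⟨F, hF_card, rfl⟩ := rk_le_natCast_iff.1 hK
  rw [closure_insert_closure, ← Finset.coe_insert] at hs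
  have hsF_card : (insert s F).card ≤ T.card + 1 :=
    (Finset.card_insert_le s F).trans (Nat.succ_le_succ hF_card)
  have hsF_free : IsFreeGroup (Subgroup.closure ((insert s F : Finset G) : Set G)) :=
    hfree _ (rk_le_natCast_iff.2 ⟨insert s F, hsF_card.trans hTm, rfl⟩)
  have hsF_card_le_rk : ((insert s F).card : ℕ∞) ≤
      (Subgroup.closure ((insert s F : Finset G) : Set G)).rk :=
    le_trans (by exact_mod_cast hsF_card) (Order.add_one_le_of_lt hs)
  have hsF := isIndependent_of_isFreeGroup_of_card_le_rk hsF_free hsF_card_le_rk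
  rw [Finset.coe_insert] at hsF
  exact hsF.insert_of_subset_closure (fun h ↦ hsK (Subgroup.subset_closure h)) hT hTK

theorem IsKFree.exists_isIndependent_insert (hfree : IsKFree m G) (hTm : T.card < m)
    (hT : IsIndependent (T : Set G)) {S : Finset G}
    (hS : (T.card : ℕ∞) < (Subgroup.closure (T ∪ S : Set G)).rk) :
    ∃ s ∈ S, s ∉ T ∧ IsIndependent (insert s (T : Set G)) := by
  classical
  induction S using Finset.induction_on with
  | empty =>
    rw [Finset.coe_empty, Set.union_empty] at hS
    exact absurd (rk_le_natCast_iff.2 ⟨T, le_rfl, rfl⟩) hS.not_ge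
  | insert s S _ ih =>
    by_cases hS' : (T.card : ℕ∞) < (Subgroup.closure (T ∪ S : Set G)).rk
    · obtain ⟨t, htS, ht⟩ := ih hS'
      exact ⟨t, Finset.mem_insert_of_mem htS, ht⟩
    · rw [Finset.coe_insert, Set.union_insert, ← closure_insert_closure] at hS
      have hTK : (T : Set G) ⊆ Subgroup.closure (T ∪ S : Set G) :=
        Set.subset_union_left.trans Subgroup.subset_closure
      obtain ⟨hsK, hsT⟩ :=
        hfree.isIndependent_insert_of_card_lt_rk hTm hT hTK (not_lt.1 hS') hS
      exact ⟨s, Finset.mem_insert_self s S, fun h ↦ hsK (hTK h), hsT⟩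

end KFree

theorem stmt4_general {G : Type*} [Group G] {m : ℕ} (hfree : IsKFree m G) {S T₀ : Finset G}
    (hrank : (m : ℕ∞) ≤ (Subgroup.closure (S : Set G)).rk) (hT₀S : T₀ ⊆ S)
    (hT₀ : IsIndependent (T₀ : Set G)) (hT₀card : T₀.card ≤ m) :
    ∃ T : Finset G, T₀ ⊆ T ∧ T ⊆ S ∧ T.card = m ∧ IsIndependent (T : Set G) := by
  classical
  suffices h : ∀ n, T₀.card ≤ n → n ≤ m →
      ∃ T : Finset G, T₀ ⊆ T ∧ T ⊆ S ∧ T.card = n ∧ IsIndependent (T : Set G) from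
    h m hT₀card le_rfl
  intro n hn
  induction n, hn using Nat.le_induction with
  | base => exact fun _ ↦ ⟨T₀, subset_rfl, hT₀S, rfl, hT₀⟩
  | succ n _ ih =>
    intro hnm
    obtain ⟨T, hT₀T, hTS, rfl, hT⟩ := ih (Nat.le_of_succ_le hnm)
    have hS : (T.card : ℕ∞) < (Subgroup.closure (T ∪ S : Set G)).rk := by
      rw [Set.union_eq_self_of_subset_left (Finset.coe_subset.2 hTS)]
      exact lt_of_lt_of_le (by exact_mod_cast hnm) hrank
    obtain ⟨s, hsS, hsT, hs⟩ := hfree.exists_isIndependent_insert hnm hT hS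
    exact ⟨insert s T, hT₀T.trans (Finset.subset_insert s T), Finset.insert_subset hsS hTS,
      Finset.card_insert_of_notMem hsT, Finset.coe_insert s T ▸ hs⟩

/-- Let `m` be a positive integer and `H` a finitely generated `m`-free group of rank at
least `m`. If `S` is a finite generating set for `H` and `T₀ ⊆ S` is independent with
`|T₀| ≤ m`, then there is an independent set `T` with `T₀ ⊆ T ⊆ S` and `|T| = m`. -/
theorem stmt4 {H : Type*} [Group H] (m : ℕ) (hm : 0 < m) (hfree : IsKFree m H)
    (hfg : Group.FG H) (hrank : (m : ℕ∞) ≤ (⊤ : Subgroup H).rk)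
    (S T₀ : Finset H) (hgen : Subgroup.closure (S : Set H) = ⊤)
    (hT₀S : T₀ ⊆ S) (hT₀ : IsIndependent (T₀ : Set H)) (hT₀card : T₀.card ≤ m) :
    ∃ T : Finset H, T₀ ⊆ T ∧ T ⊆ S ∧ T.card = m ∧ IsIndependent (T : Set H) :=
  stmt4_general hfree (hgen ▸ hrank) hT₀S hT₀ hT₀card
end
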